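/- Fix T>0. Let {ψ_n}_{n∈ℕ}⊂L²(0,T;H) converge weakly to 0 in L²(0,T;H). Then for every ρ<1, lim_{n→∞} sup_{t∈[0,T]} ‖Γ(ψ_n)(t)‖_{H^ρ} = 0. -/

import Mathlib

open MeasureTheory Filter Topology Set

noncomputable section

/-- The nonzero lattice points `ℤ²₀ = ℤ² \ {0}`. -/
abbrev Z2 : Type := {k : ℤ × ℤ // k ≠ 0}

/-- `|k| = √(k₁² + k₂²)`. -/
def knorm (k : Z2) : ℝ := Real.sqrt ((k.val.1 : ℝ) ^ 2 + (k.val.2 : ℝ) ^ 2)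

/-- Membership in `H^s`: summability of `|k|^{2s} |a_k|²`. -/
def MemHs (s : ℝ) (a : Z2 → ℂ) : Prop :=
  Summable fun k : Z2 => knorm k ^ (2 * s) * ‖a k‖ ^ 2

/-- The `H^s` norm `(Σ_k |k|^{2s}|a_k|²)^{1/2}`. -/
def hsNorm (s : ℝ) (a : Z2 → ℂ) : ℝ :=
  Real.sqrt (∑' k : Z2, knorm k ^ (2 * s) * ‖a k‖ ^ 2)

/-- Membership in `L²(0,T;H)`. -/
def MemL2H (T : ℝ) (φ : ℝ → Z2 → ℂ) : Prop :=
  (∀ k : Z2, Measurable fun t => φ t k) ∧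
  (∀ t ∈ Icc (0 : ℝ) T, Summable fun k : Z2 => ‖φ t k‖ ^ 2) ∧
  IntegrableOn (fun t => ∑' k : Z2, ‖φ t k‖ ^ 2) (Ioc 0 T)

/-- The `L²(0,T;H)` norm. -/
def L2Hnorm (T : ℝ) (φ : ℝ → Z2 → ℂ) : ℝ :=
  Real.sqrt (∫ t in Ioc (0 : ℝ) T, ∑' k : Z2, ‖φ t k‖ ^ 2)

/-- `(Γ(φ)(t))_k = ∫₀ᵗ e^{-(t-s)|k|²} φ_k(s) ds`. -/
def Gam (φ : ℝ → Z2 → ℂ) (t : ℝ) (k : Z2) : ℂ :=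
  ∫ s in Ioc (0 : ℝ) t, Real.exp (-(t - s) * knorm k ^ 2) • φ s k

/-- The `L²(0,T;H)` inner product `∫₀ᵀ ⟨ψ(t), φ(t)⟩_H dt`. -/
def innerL2 (T : ℝ) (ψ φ : ℝ → Z2 → ℂ) : ℂ :=
  ∫ t in Ioc (0 : ℝ) T, ∑' k : Z2, (starRingEnd ℂ) (ψ t k) * φ t k

/-- The eigenvalues `λ_k(δ) = (1 + δ|k|^{2γ})^{-1/2}` of `Q_δ`. -/
def lam (γ δ : ℝ) (k : Z2) : ℝ := (1 + δ * knorm k ^ (2 * γ)) ^ (-(1 / 2) : ℝ)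

/-- The diagonal operator `Q_δ`. -/
def Qop (γ δ : ℝ) (a : Z2 → ℂ) (k : Z2) : ℂ := lam γ δ k • a k

end

lemma integral_count_tsum {E : Type*} [NormedAddCommGroup E] [NormedSpace ℝ E] [CompleteSpace E]
    (f : Z2 → E) (hf : Summable fun k => ‖f k‖) :
    ∫ k, f k ∂(Measure.count : Measure Z2) = ∑' k, f k := by
  rw [MeasureTheory.integral_countable (integrable_count_iff.2 hf)]
  simp

lemma meas_unc {T : ℝ} {φ : ℝ → Z2 → ℂ} (h : MemL2H T φ) :
    Measurable (Function.uncurry φ) :=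
  measurable_from_prod_countable_left (fun k => h.1 k)

lemma int_unc {T : ℝ} {φ : ℝ → Z2 → ℂ} (h : MemL2H T φ) :
    Integrable (fun p : ℝ × Z2 => ‖Function.uncurry φ p‖ ^ 2)
      ((volume.restrict (Ioc 0 T)).prod Measure.count) := by
  rw [integrable_prod_iff (((meas_unc h).norm.pow_const 2).aestronglyMeasurable)]
  have hs : ∀ᵐ t ∂(volume.restrict (Ioc 0 T)), Summable fun k : Z2 => ‖φ t k‖ ^ 2 := by
    filter_upwards [ae_restrict_mem measurableSet_Ioc] with t ht
    exact h.2.1 t (Ioc_subset_Icc_self ht)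
  constructor
  · filter_upwards [hs] with t ht
    rw [integrable_count_iff]
    simpa using ht
  · refine Integrable.congr h.2.2 ?_
    filter_upwards [hs] with t ht
    rw [integral_count_tsum]
    · simp
    · simpa using ht

lemma memLp_unc {T : ℝ} {φ : ℝ → Z2 → ℂ} (h : MemL2H T φ) :
    MemLp (Function.uncurry φ) 2 ((volume.restrict (Ioc 0 T)).prod Measure.count) :=
  (memLp_two_iff_integrable_sq_norm (meas_unc h).aestronglyMeasurable).2 (int_unc h)

lemma int_comp {T : ℝ} {φ : ℝ → Z2 → ℂ} (h : MemL2H T φ) (k : Z2) :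
    Integrable (fun t => ‖φ t k‖ ^ 2) (volume.restrict (Ioc 0 T)) := by
  refine Integrable.mono' h.2.2 (((h.1 k).norm.pow_const 2).aestronglyMeasurable) ?_
  filter_upwards [ae_restrict_mem measurableSet_Ioc] with t ht
  have := (h.2.1 t (Ioc_subset_Icc_self ht)).le_tsum k (fun j _ => by positivity)
  simpa using this

lemma sum_comp {T : ℝ} {φ : ℝ → Z2 → ℂ} (h : MemL2H T φ) :
    (Summable fun k => ∫ t in Ioc 0 T, ‖φ t k‖ ^ 2) ∧
    ∑' k, ∫ t in Ioc 0 T, ‖φ t k‖ ^ 2 = ‖(memLp_unc h).toLp‖ ^ 2 := by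
  have hi := int_unc h
  have h1 : Summable fun k => ∫ t in Ioc 0 T, ‖φ t k‖ ^ 2 := by
    have := hi.integral_prod_right
    rw [integrable_count_iff] at this
    refine Summable.of_norm ?_
    simpa [Function.uncurry] using this
  refine ⟨h1, ?_⟩
  have h2 := integral_prod_symm _ hi
  simp only [Function.uncurry_apply_pair] at h2
  rw [integral_count_tsum _ h1.norm] at h2
  rw [← h2, ← @inner_self_eq_norm_sq ℂ, L2.inner_def]
  have h3 : ∫ a, inner ℂ (((memLp_unc h).toLp : Lp ℂ 2 ((volume.restrict (Ioc 0 T)).prod Measure.count)) a) (((memLp_unc h).toLp : Lp ℂ 2 ((volume.restrict (Ioc 0 T)).prod Measure.count)) a)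
      ∂((volume.restrict (Ioc 0 T)).prod Measure.count) =
      ∫ a, ((‖Function.uncurry φ a‖ ^ 2 : ℝ) : ℂ)
      ∂((volume.restrict (Ioc 0 T)).prod Measure.count) := by
    apply integral_congr_ae
    filter_upwards [(memLp_unc h).coeFn_toLp] with a ha
    rw [ha, inner_self_eq_norm_sq_to_K]
    simp
  rw [h3, integral_complex_ofReal]
  simp

lemma exists_rep {T : ℝ} (f : Lp ℂ 2 ((volume.restrict (Ioc 0 T)).prod (Measure.count : Measure Z2))) :
    ∃ χ : ℝ → Z2 → ℂ, MemL2H T χ ∧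
      f =ᵐ[(volume.restrict (Ioc 0 T)).prod (Measure.count : Measure Z2)] Function.uncurry χ := by
  have hm : Measurable f := (Lp.stronglyMeasurable f).measurable
  have hmk : ∀ k, Measurable fun t => f (t, k) := fun k => hm.comp (by fun_prop)
  have hi : Integrable (fun p => ‖f p‖ ^ 2) ((volume.restrict (Ioc 0 T)).prod Measure.count) :=
    (memLp_two_iff_integrable_sq_norm hm.aestronglyMeasurable).1 (Lp.memLp f)
  set S : Set ℝ := {t | ∑' k : Z2, ‖f (t, k)‖ₑ ^ 2 < ⊤} with hS
  have hSm : MeasurableSet S := by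
    refine measurableSet_lt ?_ measurable_const
    exact Measurable.tsum fun k => (hmk k).enorm.pow_const 2
  have hSs : ∀ t, t ∈ S ↔ Summable fun k : Z2 => ‖f (t, k)‖ ^ 2 := by
    intro t
    have : Integrable (fun k : Z2 => ‖f (t, k)‖ ^ 2) Measure.count ↔ 
      Summable fun k : Z2 => ‖f (t, k)‖ ^ 2 := by
      rw [integrable_count_iff]; simp
    rw [← this, Integrable, and_iff_right (Measurable.of_discrete.aestronglyMeasurable), HasFiniteIntegral, lintegral_count]
    simp [hS]
  have hSae : ∀ᵐ t ∂(volume.restrict (Ioc 0 T)), t ∈ S := by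
    filter_upwards [hi.prod_right_ae] with t ht
    rw [hSs]
    rw [integrable_count_iff] at ht
    simpa using ht
  refine ⟨fun t k => S.indicator (fun t => f (t, k)) t, ⟨?_, ?_, ?_⟩, ?_⟩
  · intro k
    exact (hmk k).indicator hSm
  · intro t _
    by_cases ht : t ∈ S
    · simpa [ht] using (hSs t).1 ht
    · simp [ht]
  · refine Integrable.congr hi.integral_prod_left ?_
    filter_upwards [hSae] with t ht
    rw [integral_count_tsum]
    · simp [ht]
    · simpa using (hSs t).1 ht
  · have : ∀ᵐ p ∂((volume.restrict (Ioc 0 T)).prod (Measure.count : Measure Z2)), p.1 ∈ S :=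
      Measure.quasiMeasurePreserving_fst.ae hSae
    filter_upwards [this] with p hp
    simp [Function.uncurry, hp]

lemma inner_rep {T : ℝ} {χ φ : ℝ → Z2 → ℂ} (hχ : MemL2H T χ) (hφ : MemL2H T φ) :
    inner ℂ ((memLp_unc hχ).toLp) ((memLp_unc hφ).toLp) = innerL2 T χ φ := by
  have hi := L2.integrable_inner (𝕜 := ℂ) ((memLp_unc hχ).toLp) ((memLp_unc hφ).toLp)
  have he : (fun a => inner ℂ (((memLp_unc hχ).toLp : Lp ℂ 2 ((volume.restrict (Ioc 0 T)).prod Measure.count)) a) (((memLp_unc hφ).toLp : Lp ℂ 2 ((volume.restrict (Ioc 0 T)).prod Measure.count)) a))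
      =ᵐ[(volume.restrict (Ioc 0 T)).prod Measure.count]
      fun p => (starRingEnd ℂ) (χ p.1 p.2) * φ p.1 p.2 := by
    filter_upwards [(memLp_unc hχ).coeFn_toLp, (memLp_unc hφ).coeFn_toLp] with a h1 h2
    rw [h1, h2]
    simp [Function.uncurry, mul_comm]
  rw [L2.inner_def, integral_congr_ae he]
  have hi2 := hi.congr he
  rw [integral_prod _ hi2, innerL2]
  apply integral_congr_ae
  filter_upwards [hi2.prod_right_ae] with t ht
  rw [integrable_count_iff] at ht
  exact integral_count_tsum _ ht

lemma bdd {T : ℝ} {ψ : ℕ → ℝ → Z2 → ℂ} (hψ : ∀ n, MemL2H T (ψ n))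
    (hweak : ∀ χ : ℝ → Z2 → ℂ, MemL2H T χ →
      Tendsto (fun n => innerL2 T χ (ψ n)) atTop (𝓝 0)) :
    ∃ M : ℝ, 0 < M ∧ ∀ n, ∑' k, ∫ t in Ioc 0 T, ‖ψ n t k‖ ^ 2 ≤ M := by
  obtain ⟨C, hC⟩ := banach_steinhaus (g := fun n => innerSL ℂ ((memLp_unc (hψ n)).toLp)) (by
    intro f
    obtain ⟨χ, hχ, hf⟩ := exists_rep f
    have hf' : f = (memLp_unc hχ).toLp := by
      apply Lp.ext
      exact hf.trans (memLp_unc hχ).coeFn_toLp.symm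
    obtain ⟨C, hC⟩ := (hweak χ hχ).norm.bddAbove_range
    refine ⟨C, fun n => ?_⟩
    rw [innerSL_apply_apply, hf', norm_inner_symm, inner_rep hχ (hψ n)]
    exact hC ⟨n, rfl⟩)
  refine ⟨C ^ 2 + 1, by positivity, fun n => ?_⟩
  rw [(sum_comp (hψ n)).2]
  have := hC n
  rw [innerSL_apply_norm] at this
  nlinarith [norm_nonneg ((memLp_unc (hψ n)).toLp)]

lemma one_le_knorm (k : Z2) : 1 ≤ knorm k := by
  obtain ⟨⟨a, b⟩, h⟩ := k
  unfold knorm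
  rw [Real.one_le_sqrt]
  have : 1 ≤ a ^ 2 + b ^ 2 := by
    by_contra hc
    apply h
    have ha : a = 0 := by nlinarith [sq_nonneg a, sq_nonneg b, sq_abs a, abs_nonneg a, Int.le_self_sq a, Int.le_self_sq (-a)]
    have hb : b = 0 := by nlinarith [sq_nonneg a, sq_nonneg b, Int.le_self_sq b, Int.le_self_sq (-b)]
    simp [ha, hb]
  exact_mod_cast this

lemma knorm_finite (R : ℝ) : {k : Z2 | knorm k < R}.Finite := by
  have hf : (((Icc (-⌈R⌉) ⌈R⌉) ×ˢ (Icc (-⌈R⌉) ⌈R⌉) : Set (ℤ × ℤ))).Finite :=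
    (Set.finite_Icc _ _).prod (Set.finite_Icc _ _)
  refine (hf.preimage (Subtype.val_injective.injOn)).subset ?_
  rintro ⟨⟨a, b⟩, h⟩ hk
  simp only [mem_setOf_eq, knorm] at hk
  have ha : |(a : ℝ)| < R := lt_of_le_of_lt (Real.abs_le_sqrt (by nlinarith [sq_nonneg (b : ℝ)])) hk
  have hb : |(b : ℝ)| < R := lt_of_le_of_lt (Real.abs_le_sqrt (by nlinarith [sq_nonneg (a : ℝ)])) hk
  rw [abs_lt] at ha hb
  have hc := Int.le_ceil R
  simp only [mem_preimage, mem_prod, mem_Icc]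
  refine ⟨⟨?_, ?_⟩, ⟨?_, ?_⟩⟩ <;> (rify; linarith)

lemma cs {ν : Measure ℝ} {g : ℝ → ℝ} {f : ℝ → ℂ} (hg : Measurable g) (hf : Measurable f)
    (hg2 : Integrable (fun s => g s ^ 2) ν) (hf2 : Integrable (fun s => ‖f s‖ ^ 2) ν) :
    ‖∫ s, g s • f s ∂ν‖ ^ 2 ≤ (∫ s, g s ^ 2 ∂ν) * ∫ s, ‖f s‖ ^ 2 ∂ν := by
  have h1 : MemLp g 2 ν := (memLp_two_iff_integrable_sq hg.aestronglyMeasurable).2 hg2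
  have h2 : MemLp (fun s => ‖f s‖) 2 ν :=
    ((memLp_two_iff_integrable_sq_norm hf.aestronglyMeasurable).2 hf2).norm
  have h := integral_mul_norm_le_Lp_mul_Lq Real.HolderConjugate.two_two
    (f := g) (g := fun s => ‖f s‖) (μ := ν) (by simpa using h1) (by simpa using h2)
  have h3 : ‖∫ s, g s • f s ∂ν‖ ≤ ∫ s, ‖g s‖ * ‖‖f s‖‖ ∂ν := by
    refine (norm_integral_le_integral_norm _).trans (le_of_eq ?_)
    simp [norm_smul]
  have h4 := h3.trans h
  simp only [Real.norm_eq_abs, Real.rpow_two, sq_abs, abs_norm, ← Real.sqrt_eq_rpow] at h4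
  have hA : 0 ≤ ∫ s, g s ^ 2 ∂ν := integral_nonneg fun _ => by positivity
  have hB : 0 ≤ ∫ s, ‖f s‖ ^ 2 ∂ν := integral_nonneg fun _ => by positivity
  calc _ ≤ (√(∫ s, g s ^ 2 ∂ν) * √(∫ s, ‖f s‖ ^ 2 ∂ν)) ^ 2 := by gcongr
    _ = _ := by rw [mul_pow, Real.sq_sqrt hA, Real.sq_sqrt hB]

lemma cs_sub {T u t : ℝ} (hu : 0 ≤ u) (ht : t ≤ T) {g : ℝ → ℝ} {f : ℝ → ℂ} (hg : Continuous g)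
    (hf : Measurable f) (hf2 : IntegrableOn (fun s => ‖f s‖ ^ 2) (Ioc 0 T)) :
    ‖∫ s in Ioc u t, g s • f s‖ ^ 2 ≤ (∫ s in Ioc u t, g s ^ 2) * ∫ s in Ioc 0 T, ‖f s‖ ^ 2 := by
  have hsub : Ioc u t ⊆ Ioc 0 T := Ioc_subset_Ioc hu ht
  refine (cs hg.measurable hf ((hg.pow 2).integrableOn_Ioc) (hf2.mono_set hsub)).trans ?_
  refine mul_le_mul_of_nonneg_left ?_ (integral_nonneg fun _ => by positivity)
  exact setIntegral_mono_set hf2 (ae_of_all _ fun _ => by positivity) hsub.eventuallyLE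

lemma int_exp {κ t : ℝ} (hκ : 0 < κ) (ht : 0 ≤ t) :
    ∫ s in Ioc 0 t, (Real.exp (-(t - s) * κ)) ^ 2 ≤ 1 / κ := by
  rw [← intervalIntegral.integral_of_le ht]
  have hd : ∀ s ∈ uIcc 0 t, HasDerivAt (fun s => (Real.exp (-(t - s) * κ)) ^ 2 / (2 * κ))
      ((Real.exp (-(t - s) * κ)) ^ 2) s := by
    intro s _
    have h1 : HasDerivAt (fun s => -(t - s) * κ) κ s := by
      have := (((hasDerivAt_id s).const_sub t).neg).mul_const κ
      simpa using this
    refine HasDerivAt.congr_deriv ((h1.exp.pow 2).div_const (2 * κ)) ?_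
    push_cast
    field_simp
  rw [intervalIntegral.integral_eq_sub_of_hasDerivAt hd
    (Continuous.intervalIntegrable (by fun_prop) _ _)]
  simp only [sub_self, neg_zero, zero_mul, Real.exp_zero]
  have : 0 ≤ Real.exp (-(t - 0) * κ) ^ 2 / (2 * κ) := by positivity
  have h2 : (1:ℝ) ^ 2 / (2 * κ) ≤ 1 / κ := by
    rw [div_le_div_iff₀ (by positivity) hκ]; nlinarith
  linarith

lemma Gam_le {T t : ℝ} (ht : t ∈ Icc 0 T) {φ : ℝ → Z2 → ℂ} (k : Z2)
    (hm : Measurable fun s => φ s k)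
    (hi : IntegrableOn (fun s => ‖φ s k‖ ^ 2) (Ioc 0 T)) :
    ‖Gam φ t k‖ ^ 2 ≤ 1 / knorm k ^ 2 * ∫ s in Ioc 0 T, ‖φ s k‖ ^ 2 := by
  have hk := one_le_knorm k
  refine (cs_sub (g := fun s => Real.exp (-(t - s) * knorm k ^ 2)) le_rfl ht.2 (by fun_prop) hm hi).trans ?_
  refine mul_le_mul_of_nonneg_right (int_exp (by positivity) ht.1) 
    (integral_nonneg fun _ => by positivity)

lemma Gam_unif {T : ℝ} (hT : 0 < T) {ψ : ℕ → ℝ → Z2 → ℂ} (hψ : ∀ n, MemL2H T (ψ n))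
    (hweak : ∀ χ : ℝ → Z2 → ℂ, MemL2H T χ →
      Tendsto (fun n => innerL2 T χ (ψ n)) atTop (𝓝 0)) (k : Z2) {M : ℝ} (hM : 0 < M)
    (hi : ∀ n, IntegrableOn (fun s => ‖ψ n s k‖ ^ 2) (Ioc 0 T))
    (hb : ∀ n, ∫ s in Ioc 0 T, ‖ψ n s k‖ ^ 2 ≤ M) {ε : ℝ} (hε : 0 < ε) :
    ∀ᶠ n in atTop, ∀ t ∈ Icc 0 T, ‖Gam (ψ n) t k‖ < ε := by
  set κ := knorm k ^ 2 with hκ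
  have hκ0 : 0 ≤ κ := by positivity
  set F : ℕ → ℝ → ℂ := fun n t => ∫ s in Ioc 0 t, Real.exp (s * κ) • ψ n s k with hF
  have hGF : ∀ n, ∀ t ∈ Icc 0 T, ‖Gam (ψ n) t k‖ ≤ ‖F n t‖ := by
    intro n t ht
    have : Gam (ψ n) t k = Real.exp (-t * κ) • F n t := by
      rw [Gam, hF]
      simp only
      rw [← integral_smul]
      congr 1
      ext s
      rw [smul_smul, ← Real.exp_add]
      congr 3
      ring
    rw [this, norm_smul]
    have : ‖Real.exp (-t * κ)‖ ≤ 1 := by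
      rw [Real.norm_eq_abs, Real.abs_exp, Real.exp_le_one_iff]
      nlinarith [ht.1]
    nlinarith [norm_nonneg (F n t)]
  have hpt : ∀ t ∈ Icc 0 T, Tendsto (fun n => F n t) atTop (𝓝 0) := by
    intro t ht
    classical
    set χ : ℝ → Z2 → ℂ := fun s j =>
      if j = k then (Ioc 0 t).indicator (fun s => ((Real.exp (s * κ) : ℝ) : ℂ)) s else 0 with hχ
    have hmem : MemL2H T χ := by
      refine ⟨?_, ?_, ?_⟩
      · intro j
        by_cases hj : j = k
        · simp only [hχ, hj, if_true]
          exact Measurable.indicator (by fun_prop) measurableSet_Ioc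
        · simp only [hχ, hj, if_false]
          exact measurable_const
      · intro s _
        refine summable_of_finite_support ((Set.finite_singleton k).subset ?_)
        intro j hj
        by_contra hne
        apply hj
        have : j ≠ k := hne
        simp [hχ, this]
      · have : (fun s => ∑' j, ‖χ s j‖ ^ 2) = 
            (Ioc 0 t).indicator (fun s => Real.exp (s * κ) ^ 2) := by
          ext s
          rw [tsum_eq_single k (by intro j hj; simp [hχ, hj])]
          by_cases hs : s ∈ Ioc 0 t
          · simp only [hχ, if_true, indicator_of_mem hs, Complex.norm_real, Real.norm_eq_abs, Real.abs_exp]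
          · simp only [hχ, if_true, indicator_of_notMem hs]
            simp
        rw [this]
        refine IntegrableOn.indicator ?_ measurableSet_Ioc
        exact Continuous.integrableOn_Ioc (by fun_prop)
    refine (hweak χ hmem).congr fun n => ?_
    rw [innerL2, hF]
    simp only
    have : (fun s => ∑' j, (starRingEnd ℂ) (χ s j) * ψ n s j) =
        (Ioc 0 t).indicator (fun s => Real.exp (s * κ) • ψ n s k) := by
      ext s
      rw [tsum_eq_single k (by intro j hj; simp [hχ, hj])]
      by_cases hs : s ∈ Ioc 0 t
      · simp only [hχ, if_true, indicator_of_mem hs, Complex.conj_ofReal, Complex.real_smul]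
      · simp only [hχ, if_true, indicator_of_notMem hs]
        simp
    rw [this, setIntegral_indicator measurableSet_Ioc, 
      inter_eq_self_of_subset_right (Ioc_subset_Ioc_right ht.2)]
  set B := Real.exp (T * κ) ^ 2 with hB
  have hB0 : 0 < B := by positivity
  have hcont : ∀ n, ∀ u t, 0 ≤ u → u ≤ t → t ≤ T → ‖F n t - F n u‖ ^ 2 ≤ (t - u) * B * M := by
    intro n u t hu hut ht
    have hint : ∀ a b, 0 ≤ a → b ≤ T →
        IntegrableOn (fun s => Real.exp (s * κ) • ψ n s k) (Ioc a b) := by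
      intro a b ha hb
      have h1 : MemLp (fun s => ψ n s k) 2 (volume.restrict (Ioc a b)) :=
        (memLp_two_iff_integrable_sq_norm ((hψ n).1 k).aestronglyMeasurable).2
          ((hi n).mono_set (Ioc_subset_Ioc ha hb))
      have h2 : MemLp (fun s => Real.exp (s * κ)) 2 (volume.restrict (Ioc a b)) :=
        (memLp_two_iff_integrable_sq (by fun_prop)).2
          (Continuous.integrableOn_Ioc (by fun_prop))
      exact memLp_one_iff_integrable.1 (h1.smul h2)
    have hd : F n t - F n u = ∫ s in Ioc u t, Real.exp (s * κ) • ψ n s k := by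
      have := setIntegral_union (Ioc_disjoint_Ioc_of_le (le_refl u)) measurableSet_Ioc
        (hint 0 u le_rfl (hut.trans ht)) (hint u t hu ht)
      rw [Ioc_union_Ioc_eq_Ioc hu hut] at this
      simp only [hF]
      rw [this]; ring
    rw [hd]
    refine (cs_sub hu ht (by fun_prop) ((hψ n).1 k) (hi n)).trans ?_
    have h0 : 0 ≤ ∫ s in Ioc 0 T, ‖ψ n s k‖ ^ 2 := integral_nonneg fun _ => by positivity
    have h1 : ∫ s in Ioc u t, Real.exp (s * κ) ^ 2 ≤ (t - u) * B := by
      have : ∫ s in Ioc u t, Real.exp (s * κ) ^ 2 ≤ ∫ s in Ioc u t, B := by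
        refine setIntegral_mono_on (Continuous.integrableOn_Ioc (by fun_prop))
          (Continuous.integrableOn_Ioc (by fun_prop)) measurableSet_Ioc ?_
        intro s hs
        have : s ≤ T := hs.2.trans ht
        rw [hB]
        gcongr
      refine this.trans (le_of_eq ?_)
      simp [hut]
    have h2 : 0 ≤ (t - u) * B := mul_nonneg (by linarith) hB0.le
    exact mul_le_mul h1 (hb n) h0 h2
  obtain ⟨m, hm⟩ := exists_nat_gt (T * B * M / (ε / 2) ^ 2)
  have hm0 : (0 : ℝ) < m := lt_of_le_of_lt (by positivity) hm
  have hgrid : ∀ᶠ n in atTop, ∀ j ∈ Finset.range (m + 1), ‖F n (j * (T / m))‖ < ε / 2 := by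
    rw [eventually_all_finset]
    intro j hj
    have hj' : (j : ℝ) ≤ m := by exact_mod_cast Finset.mem_range_succ_iff.1 hj
    have hmem : (j : ℝ) * (T / m) ∈ Icc 0 T := by
      refine ⟨by positivity, ?_⟩
      calc (j : ℝ) * (T / m) ≤ m * (T / m) := by gcongr
        _ = T := by field_simp
    have := (hpt _ hmem).norm
    rw [norm_zero] at this
    exact this.eventually (gt_mem_nhds (by positivity))
  filter_upwards [hgrid] with n hn t ht
  refine (hGF n t ht).trans_lt ?_
  set h := T / m with hh
  have hh0 : 0 < h := by positivity
  set j := ⌊t / h⌋₊ with hj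
  have hj1 : (j : ℝ) * h ≤ t := by
    rw [← le_div_iff₀ hh0]; exact Nat.floor_le (div_nonneg ht.1 hh0.le)
  have hj2 : t < (j + 1) * h := by
    rw [← div_lt_iff₀ hh0]; exact Nat.lt_floor_add_one _
  have hjm : j ∈ Finset.range (m + 1) := by
    rw [Finset.mem_range_succ_iff]
    have : (j : ℝ) ≤ m := by
      have h1 : (j : ℝ) * h ≤ m * h := by
        rw [hh]; rw [hh] at hj1
        calc _ ≤ t := hj1
          _ ≤ T := ht.2
          _ = _ := by field_simp
      exact le_of_mul_le_mul_right h1 hh0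
    exact_mod_cast this
  have h1 := hn j hjm
  have h2 := hcont n (j * h) t (by positivity) hj1 ht.2
  have h3 : (t - j * h) * B * M ≤ h * B * M := by
    have : t - j * h ≤ h := by linarith
    gcongr
  have h4 : h * B * M < (ε / 2) ^ 2 := by
    rw [div_lt_iff₀ (by positivity)] at hm
    rw [hh, show T / m * B * M = T * B * M / m by ring, div_lt_iff₀ hm0]
    linarith
  have h5 : ‖F n t - F n (j * h)‖ < ε / 2 := 
    lt_of_pow_lt_pow_left₀ 2 (by positivity) (by linarith)
  calc ‖F n t‖ = ‖(F n t - F n (j * h)) + F n (j * h)‖ := by rw [sub_add_cancel]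
    _ ≤ _ := norm_add_le _ _
    _ < ε := by linarith

/-- if `ψ_n ⇀ 0` weakly in `L²(0,T;H)`, then `Γ(ψ_n) → 0` uniformly on `[0,T]`
in `H^ρ`, for every `ρ < 1`. -/
theorem stmt4 (T : ℝ) (hT : 0 < T) (ψ : ℕ → ℝ → Z2 → ℂ)
    (hψ : ∀ n, MemL2H T (ψ n))
    (hweak : ∀ χ : ℝ → Z2 → ℂ, MemL2H T χ →
      Tendsto (fun n => innerL2 T χ (ψ n)) atTop (𝓝 0)) :
    ∀ ρ < (1 : ℝ), ∀ η > (0 : ℝ), ∃ N : ℕ, ∀ n ≥ N, ∀ t ∈ Icc (0 : ℝ) T,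
      hsNorm ρ (Gam (ψ n) t) < η := by
  intro ρ hρ η hη
  classical
  obtain ⟨M, hM, hMb⟩ := bdd hψ hweak
  set a : ℕ → Z2 → ℝ := fun n k => ∫ t in Ioc 0 T, ‖ψ n t k‖ ^ 2 with ha
  have ha0 : ∀ n k, 0 ≤ a n k := fun n k => integral_nonneg fun _ => by positivity
  have has : ∀ n, Summable (a n) := fun n => (sum_comp (hψ n)).1
  have hak : ∀ n k, a n k ≤ M := fun n k =>
    ((has n).le_tsum k (fun j _ => ha0 n j)).trans (hMb n)
  set ε := η ^ 2 / (4 * M) with hε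
  have hε0 : 0 < ε := by positivity
  -- a cutoff
  obtain ⟨R, hR⟩ : ∃ R : ℝ, ∀ x ≥ R, x ^ (2 * ρ - 2) ≤ ε := by
    have h1 : Tendsto (fun x : ℝ => x ^ (-(2 - 2 * ρ))) atTop (𝓝 0) :=
      tendsto_rpow_neg_atTop (by linarith)
    obtain ⟨R, hR⟩ := eventually_atTop.1 (h1.eventually (ge_mem_nhds hε0))
    refine ⟨R, fun x hx => ?_⟩
    have := hR x hx
    rwa [neg_sub] at this
  set S : Finset Z2 := (knorm_finite R).toFinset with hS
  set c : ℝ := ∑ k ∈ S, knorm k ^ (2 * ρ) + 1 with hc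
  have hkp : ∀ k : Z2, 0 < knorm k := fun k => lt_of_lt_of_le one_pos (one_le_knorm k)
  have hkr : ∀ k : Z2, 0 < knorm k ^ (2 * ρ) := fun k => Real.rpow_pos_of_pos (hkp k) _
  have hc0 : 0 < c := by
    have : 0 ≤ ∑ k ∈ S, knorm k ^ (2 * ρ) := Finset.sum_nonneg fun k _ => (hkr k).le
    linarith
  set δ : ℝ := √(η ^ 2 / (2 * c)) with hδ
  have hδ0 : 0 < δ := Real.sqrt_pos.2 (by positivity)
  have hδ2 : δ ^ 2 = η ^ 2 / (2 * c) := Real.sq_sqrt (by positivity)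
  have hev : ∀ᶠ n in atTop, ∀ k ∈ S, ∀ t ∈ Icc 0 T, ‖Gam (ψ n) t k‖ < δ := by
    rw [eventually_all_finset]
    intro k _
    exact Gam_unif hT hψ hweak k hM (fun n => int_comp (hψ n) k) (fun n => hak n k) hδ0
  obtain ⟨N, hN⟩ := eventually_atTop.1 hev
  refine ⟨N, fun n hn t ht => ?_⟩
  have hterm : ∀ k, knorm k ^ (2 * ρ) * ‖Gam (ψ n) t k‖ ^ 2 ≤ knorm k ^ (2 * ρ - 2) * a n k := by
    intro k
    have h1 := Gam_le ht k ((hψ n).1 k) (int_comp (hψ n) k)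
    calc _ ≤ knorm k ^ (2 * ρ) * (1 / knorm k ^ 2 * a n k) :=
          mul_le_mul_of_nonneg_left h1 (hkr k).le
      _ = _ := by
        rw [Real.rpow_sub (hkp k), Real.rpow_two]; ring
  set b : Z2 → ℝ := fun k => (if k ∈ S then knorm k ^ (2 * ρ) * δ ^ 2 else 0) + ε * a n k with hb
  have hs1 : Summable fun k => (if k ∈ S then knorm k ^ (2 * ρ) * δ ^ 2 else 0) :=
    summable_of_ne_finset_zero (s := S) fun k hk => by simp [hk]
  have hs2 : Summable fun k => ε * a n k := (has n).mul_left ε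
  have hbs : Summable b := hs1.add hs2
  have hle : ∀ k, knorm k ^ (2 * ρ) * ‖Gam (ψ n) t k‖ ^ 2 ≤ b k := by
    intro k
    have h0 : 0 ≤ ε * a n k := mul_nonneg hε0.le (ha0 n k)
    by_cases hk : k ∈ S
    · simp only [hb, hk, if_true]
      have h1 := hN n hn k hk t ht
      have h2 : knorm k ^ (2 * ρ) * ‖Gam (ψ n) t k‖ ^ 2 ≤ knorm k ^ (2 * ρ) * δ ^ 2 := by
        have := (hkr k).le
        gcongr
      linarith
    · simp only [hb, hk, if_false, zero_add]
      refine (hterm k).trans (mul_le_mul_of_nonneg_right (hR _ ?_) (ha0 n k))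
      simpa [hS] using hk
  have hfs : Summable fun k => knorm k ^ (2 * ρ) * ‖Gam (ψ n) t k‖ ^ 2 :=
    Summable.of_nonneg_of_le (fun k => mul_nonneg (hkr k).le (by positivity)) hle hbs
  have htot := hfs.tsum_le_tsum hle hbs
  have hbt : ∑' k, b k = (∑ k ∈ S, knorm k ^ (2 * ρ)) * δ ^ 2 + ε * ∑' k, a n k := by
    rw [hb, hs1.tsum_add hs2, tsum_mul_left, tsum_eq_sum (s := S) (fun k hk => by simp [hk]),
      Finset.sum_mul]
    congr 1
    exact Finset.sum_congr rfl fun k hk => by simp [hk]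
  have h1 : (∑ k ∈ S, knorm k ^ (2 * ρ)) * δ ^ 2 < η ^ 2 / 2 := by
    calc _ < c * δ ^ 2 := by
          apply mul_lt_mul_of_pos_right _ (by positivity)
          rw [hc]; linarith
      _ = η ^ 2 / 2 := by rw [hδ2]; field_simp
  have h2 : ε * ∑' k, a n k ≤ η ^ 2 / 4 := by
    calc _ ≤ ε * M := mul_le_mul_of_nonneg_left (hMb n) hε0.le
      _ = _ := by rw [hε]; field_simp
  rw [hsNorm, Real.sqrt_lt' hη]
  nlinarith [sq_pos_of_pos hη]
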